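/- Let R be a commutative ring, S an R-module, and e ∈ S such that evaluation at e gives an isomorphism Hom_R(S,S) ≅ S. Then the unique R-bilinear multiplication μ on S with μ(e,e) = e is associative and has e as a two-sided unit, making S a commutative R-algebra with unit e. -/

import Mathlib

/-!
If linear maps out of `S` are determined by their value at `e`, then bilinear maps on `S × S` are
determined by their value at `(e, e)`. A bilinear map and its flip agree there, so every bilinear
map is symmetric. For fixed `z`, applying this to `(x, y) ↦ μ x (μ y z)` as well as to `μ` itself
gives associativity.
-/

section InjectiveEval

variable {R S M : Type*} [CommSemiring R] [AddCommMonoid S] [Module R S]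
  [AddCommMonoid M] [Module R M] {e : S}

theorem bilin_ext_of_injective_eval (he : Function.Injective fun f : S →ₗ[R] M => f e)
    {B C : S →ₗ[R] S →ₗ[R] M} (h : B e e = C e e) : B = C := by
  have h_left : B e = C e := he h
  have h_right (y : S) : B.flip y = C.flip y := he (LinearMap.congr_fun h_left y)
  exact LinearMap.ext₂ fun x y => LinearMap.congr_fun (h_right y) x

theorem bilin_comm_of_injective_eval (he : Function.Injective fun f : S →ₗ[R] M => f e)
    (B : S →ₗ[R] S →ₗ[R] M) (x y : S) : B x y = B y x :=
  LinearMap.congr_fun₂ (bilin_ext_of_injective_eval he (B := B) (C := B.flip) rfl) x y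

theorem bilin_left_comm_of_injective_eval (he : Function.Injective fun f : S →ₗ[R] S => f e)
    (μ : S →ₗ[R] S →ₗ[R] S) (x y z : S) : μ x (μ y z) = μ y (μ x z) :=
  bilin_comm_of_injective_eval he (μ.compl₂ (μ.flip z)) x y

theorem bilin_assoc_of_injective_eval (he : Function.Injective fun f : S →ₗ[R] S => f e)
    (μ : S →ₗ[R] S →ₗ[R] S) (x y z : S) : μ (μ x y) z = μ x (μ y z) :=
  calc
    μ (μ x y) z = μ z (μ x y) := bilin_comm_of_injective_eval he μ _ _
    _ = μ x (μ z y) := bilin_left_comm_of_injective_eval he μ z x y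
    _ = μ x (μ y z) := congrArg (μ x) (bilin_comm_of_injective_eval he μ z y)

theorem stmt_2_general (he : Function.Injective fun f : S →ₗ[R] S => f e)
    (μ : S →ₗ[R] S →ₗ[R] S) :
    (∀ x y z : S, μ (μ x y) z = μ x (μ y z)) ∧
    (∀ x y : S, μ x y = μ y x) ∧
    (μ e e = e → (∀ x : S, μ e x = x) ∧ (∀ x : S, μ x e = x)) := by
  refine ⟨bilin_assoc_of_injective_eval he μ, bilin_comm_of_injective_eval he μ, fun hμ => ?_⟩
  have left_unit : μ e = LinearMap.id := he hμ
  have right_unit : μ.flip e = LinearMap.id := he hμ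
  exact ⟨LinearMap.congr_fun left_unit, LinearMap.congr_fun right_unit⟩

end InjectiveEval

theorem stmt_2 {R : Type*} [CommRing R] {S : Type*} [AddCommGroup S] [Module R S] (e : S)
    (he : Function.Bijective fun f : S →ₗ[R] S => f e)
    (μ : S →ₗ[R] S →ₗ[R] S) (hμ : μ e e = e) :
    (∀ x y z : S, μ (μ x y) z = μ x (μ y z)) ∧
    (∀ x : S, μ e x = x) ∧ (∀ x : S, μ x e = x) ∧
    (∀ x y : S, μ x y = μ y x) := by
  obtain ⟨assoc, comm, unit⟩ := stmt_2_general he.injective μ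
  exact ⟨assoc, (unit hμ).1, (unit hμ).2, comm⟩
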